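/- Oesterlé's abc Conjecture implies the Small Derivatives Conjecture: suppose there is a real number M with 1 < M < 2 such that every triple of coprime positive integers a, b, c with a + b = c satisfies c < rad(abc)^M. Then for every η > 1 − (2 − M)/(4M), for all but finitely many triples of coprime positive integers (a,b,c) satisfying a + b = c and not, up to order, of the form (1, N, q) with q prime, there exists ψ ∈ 𝒯(a,b) such that a, b are ψ-independent and ‖ψ‖ < c^η. -/

import Mathlib

open Finset

/-- The arithmetic derivative attached to `ψ`: `d^ψ(n) = Σ_{p ∣ n} (n·v_p(n)/p)·ψ(p)`,
with `d^ψ(0) = 0` (empty sum). Each term is written as `(n/p)·v_p(n)·ψ(p)`, exact since `p ∣ n`. -/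
def dpsi (ψ : ℕ → ℤ) (n : ℤ) : ℤ :=
  ∑ p ∈ n.natAbs.primeFactors, (n / (p : ℤ)) * (n.natAbs.factorization p : ℤ) * ψ p

/-- A derivation: a function on primes (zero off primes) with finite norm. -/
def IsDeriv (ψ : ℕ → ℤ) : Prop :=
  (∀ p : ℕ, ¬ p.Prime → ψ p = 0) ∧ ∃ B : ℤ, ∀ p : ℕ, |ψ p| ≤ B

/-- The norm `‖ψ‖ = sup_p |ψ(p)|`. -/
noncomputable def dNorm (ψ : ℕ → ℤ) : ℝ := ⨆ p : ℕ, (|ψ p| : ℝ)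

/-- Membership in `𝒯(a,b)`: a derivation supported on the primes dividing `ab(a+b)`
satisfying `d^ψ(a+b) = d^ψ(a) + d^ψ(b)`. -/
def MemT (a b : ℕ) (ψ : ℕ → ℤ) : Prop :=
  IsDeriv ψ ∧ (∀ p : ℕ, p.Prime → ¬ p ∣ (a * b * (a + b)) → ψ p = 0) ∧
    dpsi ψ ((a : ℤ) + (b : ℤ)) = dpsi ψ (a : ℤ) + dpsi ψ (b : ℤ)

/-- The `ψ`-Wronskian `W^ψ(a,b) = a·d^ψ(b) − b·d^ψ(a)`. -/
def Wpsi (ψ : ℕ → ℤ) (a b : ℤ) : ℤ := a * dpsi ψ b - b * dpsi ψ a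

/-- Membership in `𝒯°(a,b)`: elements of `𝒯(a,b)` for which `a, b` are `ψ`-dependent. -/
def MemT0 (a b : ℕ) (ψ : ℕ → ℤ) : Prop := MemT a b ψ ∧ Wpsi ψ (a : ℤ) (b : ℤ) = 0

/-- The radical of `n`: product of the distinct primes dividing `n`. -/
def radN (n : ℕ) : ℕ := ∏ p ∈ n.primeFactors, p

/-- The Small Derivatives Conjecture with exponent `η`: for all but finitely many triples of
coprime positive integers `(a,b,c)` with `a+b=c`, not of the form `(1,N,q)` with `q` prime
up to order, there is `ψ ∈ 𝒯(a,b)` with `a,b` `ψ`-independent and `‖ψ‖ < c^η`. -/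
def SDC (η : ℝ) : Prop :=
  {t : ℕ × ℕ × ℕ | 0 < t.1 ∧ 0 < t.2.1 ∧ t.1 + t.2.1 = t.2.2 ∧ Nat.Coprime t.1 t.2.1 ∧
    ¬ (∃ N q : ℕ, q.Prime ∧ ({t.1, t.2.1, t.2.2} : Multiset ℕ) = {1, N, q}) ∧
    ¬ ∃ ψ : ℕ → ℤ, MemT t.1 t.2.1 ψ ∧ Wpsi ψ (t.1 : ℤ) (t.2.1 : ℤ) ≠ 0 ∧
      dNorm ψ < (t.2.2 : ℝ) ^ η}.Finite

/-!
Up to the factor `∏ v_p(abc)`, which is `c ^ o(1)` by the divisor bound, it suffices to find small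
weights `φ` for the linear form `∑ (n / p) φ(p)` in place of the arithmetic derivative.

* If every prime dividing `abc` is at most `√(3 c)`, put `n' = n / rad n`. A Bézout argument gives
  integers with `a' x + b' y = c' z` and Wronskian `a' b' c' ≠ 0`, such that `x / rad a`,
  `y / rad b` and `z / rad c` have size at most `c / rad(abc) + 1`. Partial fractions spread them
  over the primes, so that `φ` has size about `√c · c / rad(abc)`, which the abc hypothesis bounds
  by `c ^ (3 / 2 - 1 / M)`.
* If some prime `p` exceeds `√(3 c)`, then a non-exceptional triple has two further primes dividing
  different members, and Siegel's lemma yields a nonzero solution supported on the three primes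
  with entries at most `√(3 c) < p`. Dependence would force `p ∣ φ(p)`, hence `φ(p) = 0`, and then
  the other two entries would vanish as well.

For `M < 2` the exponent `3 / 2 - 1 / M` is smaller than `1 - (2 - M) / (4 M)`.
-/

theorem exists_eq_sum_mul_prod_sdiff_add {ι : Type*} [DecidableEq ι] {S : Finset ι}
    (hS : S.Nonempty) {s : ι → ℤ} (hs : ∀ i ∈ S, 0 < s i)
    (hcop : Pairwise (Function.onFun IsCoprime fun i : S => s i)) (x : ℤ) :
    ∃ (r : ι → ℤ) (k : ℤ), (∀ i ∈ S, 0 ≤ r i ∧ r i < s i) ∧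
      x = ∑ i ∈ S, r i * ∏ j ∈ S \ {i}, s j + k * ∏ i ∈ S, s i := by
  obtain ⟨μ, hμ⟩ := (exists_sum_eq_one_iff_pairwise_coprime hS).2 hcop
  refine ⟨fun i => x * μ i % s i, ∑ i ∈ S, x * μ i / s i,
    fun i hi => ⟨Int.emod_nonneg _ (hs i hi).ne', Int.emod_lt_of_pos _ (hs i hi)⟩, ?_⟩
  calc x = ∑ i ∈ S, x * μ i * ∏ j ∈ S \ {i}, s j := by
        simp only [mul_assoc, ← mul_sum, hμ, mul_one]
    _ = ∑ i ∈ S, (x * μ i % s i * ∏ j ∈ S \ {i}, s j + x * μ i / s i * ∏ i ∈ S, s i) :=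
      sum_congr rfl fun i hi => by
        rw [prod_eq_mul_prod_sdiff_singleton_of_mem hi s]
        linear_combination -(∏ j ∈ S \ {i}, s j) * Int.mul_ediv_add_emod (x * μ i) (s i)
    _ = _ := by rw [sum_add_distrib, sum_mul]

theorem sum_mul_prod_sdiff_mem_Icc {ι : Type*} [DecidableEq ι] {S T : Finset ι} (hTS : T ⊆ S)
    {r s : ι → ℤ} (hr : ∀ i ∈ S, 0 ≤ r i ∧ r i ≤ s i) :
    ∑ i ∈ T, r i * ∏ j ∈ S \ {i}, s j ∈ Set.Icc 0 (#T * ∏ i ∈ S, s i) := by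
  have hQ : ∀ i, 0 ≤ ∏ j ∈ S \ {i}, s j := fun i =>
    prod_nonneg fun j hj => (hr j (mem_sdiff.1 hj).1).1.trans (hr j (mem_sdiff.1 hj).1).2
  refine ⟨sum_nonneg fun i hi => mul_nonneg (hr i (hTS hi)).1 (hQ i), ?_⟩
  rw [← nsmul_eq_mul]
  refine sum_le_card_nsmul _ _ _ fun i hi => ?_
  rw [prod_eq_mul_prod_sdiff_singleton_of_mem (hTS hi) s]
  exact mul_le_mul_of_nonneg_right (hr i (hTS hi)).2 (hQ i)

theorem abs_le_mul_add_of_eq_mul_add {x y s Q R t m : ℝ} (hQ : 0 < Q) (hx : |x| ≤ s * Q * t)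
    (hR0 : 0 ≤ R) (hR : R ≤ m * (s * Q)) (h : x = y * Q + R) : |y| ≤ s * (t + m) := by
  refine le_of_mul_le_mul_right ?_ hQ
  calc |y| * Q = |x - R| := by rw [h, add_sub_cancel_right, abs_mul, abs_of_pos hQ]
    _ ≤ |x| + |R| := abs_sub _ _
    _ ≤ s * Q * t + m * (s * Q) := by
        rw [abs_of_nonneg hR0]
        exact add_le_add hx hR
    _ = s * (t + m) * Q := by ring

/-- Dividing by `∏ s i` this is a partial fraction decomposition `x / ∏ s i = ∑ y i / s i`: all
numerators but one are reduced modulo their denominators, and the last one absorbs the integer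
part. -/
theorem exists_sum_mul_prod_sdiff_eq {ι : Type*} [DecidableEq ι] {S : Finset ι}
    (hS : S.Nonempty) {s : ι → ℤ} (hs : ∀ i ∈ S, 0 < s i)
    (hcop : Pairwise (Function.onFun IsCoprime fun i : S => s i)) {x : ℤ} {t : ℝ}
    (hx : |(x : ℝ)| ≤ (∏ i ∈ S, s i : ℤ) * t) :
    ∃ y : ι → ℤ, ∑ i ∈ S, y i * ∏ j ∈ S \ {i}, s j = x ∧
      ∀ i ∈ S, |(y i : ℝ)| ≤ s i * (t + #S) := by
  obtain ⟨r, k, hr, hxr⟩ := exists_eq_sum_mul_prod_sdiff_add hS hs hcop x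
  obtain ⟨l, hl⟩ := hS
  set P : ℤ := ∏ i ∈ S, s i
  set Q : ι → ℤ := fun i => ∏ j ∈ S \ {i}, s j
  set R : ℤ := ∑ i ∈ S.erase l, r i * Q i
  have hPl : P = s l * Q l := prod_eq_mul_prod_sdiff_singleton_of_mem hl s
  have hR : 0 ≤ R ∧ R ≤ #(S.erase l) * P :=
    sum_mul_prod_sdiff_mem_Icc (erase_subset l S) fun i hi => ⟨(hr i hi).1, (hr i hi).2.le⟩
  have hxl : x = (r l + s l * k) * Q l + R := by
    rw [hxr, ← add_sum_erase S _ hl, hPl]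
    ring
  have hP : (0 : ℝ) < P := by exact_mod_cast prod_pos hs
  refine ⟨Function.update r l (r l + s l * k), ?_, fun i hi => ?_⟩
  · rw [← add_sum_erase S _ hl, Function.update_self, hxl]
    exact congrArg _ (sum_congr rfl fun i hi => by rw [Function.update_of_ne (ne_of_mem_erase hi)])
  obtain rfl | hil := eq_or_ne i l
  · have hQi : (0 : ℝ) < Q i := by exact_mod_cast prod_pos fun j hj => hs j (mem_sdiff.1 hj).1
    have hPi : (P : ℝ) = s i * Q i := by exact_mod_cast hPl
    have hRcard : (R : ℝ) ≤ #S * (s i * Q i) := by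
      have hRP : (R : ℝ) ≤ #(S.erase i) * P := by exact_mod_cast hR.2
      rw [← hPi]
      refine hRP.trans ?_
      gcongr
      exact erase_subset i S
    rw [Function.update_self]
    exact abs_le_mul_add_of_eq_mul_add hQi (hPi ▸ hx) (by exact_mod_cast hR.1) hRcard
      (by exact_mod_cast hxl)
  · have ht : 0 ≤ t := nonneg_of_mul_nonneg_right ((abs_nonneg _).trans hx) hP
    have hcard : (1 : ℝ) ≤ #S := by exact_mod_cast card_pos.2 ⟨l, hl⟩
    rw [Function.update_of_ne hil, abs_of_nonneg (by exact_mod_cast (hr i hi).1)]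
    exact (Int.cast_le.2 (hr i hi).2.le).trans
      (le_mul_of_one_le_right (by exact_mod_cast (hs i hi).le) (by linarith))

theorem exists_ne_zero_map_eq_zero_le {ι : Type*} [DecidableEq ι] {S : Finset ι} (hS : 1 < #S)
    (L : (ι → ℤ) →ₗ[ℤ] ℤ) {B : ℝ} (hB : 1 ≤ B)
    (hL : ∀ i ∈ S, |(L (Pi.single i 1) : ℝ)| ≤ B) :
    ∃ φ : ι → ℤ, φ ≠ 0 ∧ (∀ i ∉ S, φ i = 0) ∧ L φ = 0 ∧
      ∀ i, |(φ i : ℝ)| ≤ (#S * B) ^ (1 / ((#S : ℝ) - 1)) := by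
  let := Matrix.seminormedAddCommGroup (m := Fin 1) (n := S) (α := ℤ)
  set A : Matrix (Fin 1) S ℤ := Matrix.of fun _ i => L (Pi.single (i : ι) 1)
  obtain ⟨x, hx0, hAx, hx⟩ := Int.Matrix.exists_ne_zero_int_vec_norm_le A (by simpa using hS)
    (by simp)
  have hA : ‖A‖ ≤ B := (Matrix.norm_le_iff (by linarith)).2 fun _ i => by
    simpa [A, Int.norm_eq_abs] using hL i i.2
  set φ : ι → ℤ := ∑ i : S, x i • Pi.single (i : ι) 1
  have hφ : ∀ i : S, φ i = x i := fun i => by simp [φ, Pi.single_apply]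
  have hφ0 : ∀ i ∉ S, φ i = 0 := fun i hi => by
    rw [show φ i = ∑ j : S, (x j • Pi.single (j : ι) 1 : ι → ℤ) i from Finset.sum_apply _ _ _]
    exact sum_eq_zero fun j _ => by
      rw [Pi.smul_apply, Pi.single_eq_of_ne (ne_of_mem_of_not_mem j.2 hi).symm, smul_zero]
  refine ⟨φ, fun h => hx0 (funext fun i => by rw [← hφ, h]; rfl), hφ0, ?_, fun i => ?_⟩
  · rw [map_sum]
    refine Eq.trans (sum_congr rfl fun i _ => ?_) (congrFun hAx 0)
    rw [map_smul, smul_eq_mul, mul_comm]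
    rfl
  by_cases hi : i ∈ S
  · rw [hφ ⟨i, hi⟩, ← Int.norm_eq_abs]
    refine (norm_le_pi_norm x _).trans (hx.trans ?_)
    simp only [Fintype.card_coe, Fintype.card_fin, Nat.cast_one]
    have hexp : 0 ≤ 1 / ((#S : ℝ) - 1) := one_div_nonneg.2 (sub_nonneg.2 (by exact_mod_cast hS.le))
    gcongr
    exact max_le hB hA
  · rw [hφ0 i hi, Int.cast_zero, abs_zero]
    positivity

theorem exists_nonneg_mul_sub_mul_eq {r s C : ℤ} (hr : 0 < r) (hs : 0 ≤ s) (hC : 0 ≤ C)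
    (hrs : IsCoprime r s) : ∃ x y : ℤ, 0 ≤ x ∧ x < r ∧ 0 ≤ y ∧ y * r - x * s = C := by
  obtain ⟨u, v, huv⟩ := hrs
  have hx : 0 ≤ -(C * v) % r := Int.emod_nonneg _ hr.ne'
  have hdet : (C * u - -(C * v) / r * s) * r - -(C * v) % r * s = C := by
    linear_combination C * huv - s * Int.mul_ediv_add_emod (-(C * v)) r
  refine ⟨-(C * v) % r, C * u - -(C * v) / r * s, hx, Int.emod_lt_of_pos _ hr, ?_, hdet⟩
  exact nonneg_of_mul_nonneg_left (by nlinarith) hr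

theorem exists_bounded_solution {r s u A B C : ℤ} (hr : 0 < r) (hs : 0 < s) (hA : 0 < A)
    (hB : 0 < B) (hC : 0 < C) (hsum : u * C = r * A + s * B) (hrs : IsCoprime r s)
    (hCs : IsCoprime C s) :
    ∃ x y z : ℤ, A * x + B * y = C * z ∧ y * r - x * s = C ∧ 0 ≤ x ∧ x < r ∧
      |(y : ℝ)| ≤ s * ((C : ℝ) / (r * s) + 1) ∧ |(z : ℝ)| ≤ u * ((C : ℝ) / (r * s) + 1) := by
  obtain ⟨x, y, hx0, hxr, hy0, hdet⟩ := exists_nonneg_mul_sub_mul_eq hr hs.le hC.le hrs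
  obtain ⟨z, hz⟩ : C ∣ A * x + B * y :=
    hCs.dvd_of_dvd_mul_left ⟨u * y - A, by linear_combination (-y) * hsum - A * hdet⟩
  have hz0 : 0 ≤ z := nonneg_of_mul_nonneg_right (hz ▸ by positivity) hC
  refine ⟨x, y, z, hz, hdet, hx0, hxr, ?_⟩
  rify at hr hs hA hB hC hsum hx0 hxr hy0 hdet hz hz0
  set t : ℝ := C / (r * s) + 1
  have ht : r * s * t = C + r * s := by simp only [t]; field_simp
  have hy : y ≤ s * t := le_of_mul_le_mul_left (by nlinarith) hr
  have hx : x ≤ r * t := hxr.le.trans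
    (le_mul_of_one_le_right hr.le (le_add_of_nonneg_left (by positivity)))
  rw [abs_of_nonneg hy0, abs_of_nonneg hz0]
  refine ⟨hy, le_of_mul_le_mul_left ?_ hC⟩
  calc (C : ℝ) * z = A * x + B * y := hz.symm
    _ ≤ A * (r * t) + B * (s * t) := by gcongr
    _ = C * (u * t) := by linear_combination (-t) * hsum

theorem exists_add_one_le_mul_two_rpow {ε : ℝ} (hε : 0 < ε) :
    ∃ C : ℝ, 1 ≤ C ∧ ∀ v : ℕ, (v + 1 : ℝ) ≤ C * 2 ^ (ε * v) := by
  have hlog : 0 < Real.log 2 := Real.log_pos one_lt_two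
  refine ⟨1 + 1 / (ε * Real.log 2), le_add_of_nonneg_right (by positivity), fun v => ?_⟩
  have hexp : Real.log 2 * (ε * v) + 1 ≤ 2 ^ (ε * v) := by
    rw [Real.rpow_def_of_pos two_pos]
    exact Real.add_one_le_exp _
  calc (v + 1 : ℝ) ≤ (1 + 1 / (ε * Real.log 2)) * (Real.log 2 * (ε * v) + 1) := by
        have : 0 ≤ Real.log 2 * (ε * v) + 1 / (ε * Real.log 2) := by positivity
        field_simp at this ⊢
        nlinarith
    _ ≤ _ := by gcongr

theorem add_one_le_rpow_of_two_le {x : ℝ} (hx : 2 ≤ x) (v : ℕ) : (v + 1 : ℝ) ≤ x ^ v := by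
  calc (v + 1 : ℝ) ≤ 2 ^ v := by exact_mod_cast Nat.lt_two_pow_self
    _ ≤ x ^ v := by gcongr

theorem rpow_eq_prod_primeFactors {n : ℕ} (hn : n ≠ 0) (ε : ℝ) :
    (n : ℝ) ^ ε = ∏ p ∈ n.primeFactors, (p : ℝ) ^ (ε * n.factorization p) := by
  conv_lhs => rw [← Nat.prod_factorization_pow_eq_self hn]
  rw [Finsupp.prod, Nat.support_factorization, Nat.cast_prod,
    ← Real.finsetProd_rpow _ _ fun _ _ => Nat.cast_nonneg _]
  refine prod_congr rfl fun p _ => ?_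
  rw [Nat.cast_pow, ← Real.rpow_natCast_mul p.cast_nonneg, mul_comm]

theorem exists_card_divisors_le {ε : ℝ} (hε : 0 < ε) :
    ∃ C : ℝ, ∀ n : ℕ, n ≠ 0 → (#n.divisors : ℝ) ≤ C * (n : ℝ) ^ ε := by
  obtain ⟨C, hC1, hC⟩ := exists_add_one_le_mul_two_rpow hε
  obtain ⟨K, hK⟩ := exists_nat_ge ((2 : ℝ) ^ (1 / ε))
  have hlocal : ∀ p : ℕ, p.Prime → ∀ v : ℕ,
      (v + 1 : ℝ) ≤ (if p < K then C else 1) * (p : ℝ) ^ (ε * v) := fun p hp v => by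
    split_ifs with hpK
    · refine (hC v).trans ?_
      gcongr
      exact_mod_cast hp.two_le
    · have hpε : (2 : ℝ) ≤ (p : ℝ) ^ ε := by
        rw [← Real.rpow_inv_le_iff_of_pos two_pos.le p.cast_nonneg hε, ← one_div]
        exact hK.trans (by exact_mod_cast not_lt.1 hpK)
      rw [one_mul, Real.rpow_mul p.cast_nonneg, Real.rpow_natCast]
      exact add_one_le_rpow_of_two_le hpε v
  refine ⟨C ^ K, fun n hn => ?_⟩
  calc (#n.divisors : ℝ) = ∏ p ∈ n.primeFactors, (n.factorization p + 1 : ℝ) := by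
        rw [Nat.card_divisors hn]
        push_cast
        rfl
    _ ≤ ∏ p ∈ n.primeFactors, (if p < K then C else 1) * (p : ℝ) ^ (ε * n.factorization p) :=
        prod_le_prod (fun _ _ => by positivity)
          fun p hp => hlocal p (Nat.prime_of_mem_primeFactors hp) _
    _ = C ^ #{p ∈ n.primeFactors | p < K} * (n : ℝ) ^ ε := by
        rw [prod_mul_distrib, ← prod_filter, prod_const, rpow_eq_prod_primeFactors hn]
    _ ≤ C ^ K * (n : ℝ) ^ ε := by
        gcongr
        exact (card_le_card fun p hp => mem_range.2 (mem_filter.1 hp).2).trans_eq (card_range K)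

theorem radN_pos (n : ℕ) : 0 < radN n :=
  prod_pos fun _ h => (Nat.prime_of_mem_primeFactors h).pos

theorem radN_dvd (n : ℕ) : radN n ∣ n := Nat.prod_primeFactors_dvd n

theorem radN_mul_div_radN (n : ℕ) : radN n * (n / radN n) = n := Nat.mul_div_cancel' (radN_dvd n)

theorem div_radN_pos {n : ℕ} (hn : n ≠ 0) : 0 < n / radN n :=
  Nat.div_pos (Nat.le_of_dvd (Nat.pos_of_ne_zero hn) (radN_dvd n)) (radN_pos n)

theorem radN_mul_of_coprime {m n : ℕ} (h : m.Coprime n) : radN (m * n) = radN m * radN n := by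
  simp only [radN]
  rw [h.primeFactors_mul, prod_union h.disjoint_primeFactors]

/-- The product of the valuations `v_p(n)` over the primes `p ∣ n`, a common denominator for
passing from a solution in reduced derivatives to one in arithmetic derivatives. -/
def valProd (n : ℕ) : ℕ := ∏ p ∈ n.primeFactors, n.factorization p

theorem valProd_ne_zero (n : ℕ) : valProd n ≠ 0 :=
  prod_ne_zero_iff.2 fun _ hp => Finsupp.mem_support_iff.1 hp

theorem valProd_le_card_divisors {n : ℕ} (hn : n ≠ 0) : valProd n ≤ #n.divisors := by
  rw [Nat.card_divisors hn]
  exact prod_le_prod' fun p _ => Nat.le_succ _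

theorem card_primeFactors_le_card_divisors (n : ℕ) : #n.primeFactors ≤ #n.divisors :=
  card_le_card fun _ hp => Nat.mem_divisors.2
    ⟨Nat.dvd_of_mem_primeFactors hp, (Nat.mem_primeFactors.1 hp).2.2⟩

/-- The arithmetic derivative with the valuations removed, `φ ↦ ∑_{p ∣ n} (n / p) φ(p)`, as a linear
form in `φ`. Substituting `φ(p) = v_p(n) ψ(p)` gives `d^ψ(n)`. -/
def reducedDeriv (n : ℕ) : (ℕ → ℤ) →ₗ[ℤ] ℤ :=
  ∑ p ∈ n.primeFactors, ((n / p : ℕ) : ℤ) • LinearMap.proj p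

section reducedDeriv

variable {n p : ℕ} {φ φ' : ℕ → ℤ}

theorem reducedDeriv_apply (n : ℕ) (φ : ℕ → ℤ) :
    reducedDeriv n φ = ∑ p ∈ n.primeFactors, ((n / p : ℕ) : ℤ) * φ p := by
  simp [reducedDeriv]

theorem reducedDeriv_congr (h : ∀ p ∈ n.primeFactors, φ p = φ' p) :
    reducedDeriv n φ = reducedDeriv n φ' := by
  rw [reducedDeriv_apply, reducedDeriv_apply]
  exact sum_congr rfl fun p hp => by rw [h p hp]

theorem reducedDeriv_eq_zero (h : ∀ p ∈ n.primeFactors, φ p = 0) : reducedDeriv n φ = 0 := by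
  rw [reducedDeriv_congr (φ' := 0) h, map_zero]

theorem reducedDeriv_eq_div_mul (hp : p ∈ n.primeFactors)
    (h : ∀ q ∈ n.primeFactors, q ≠ p → φ q = 0) : reducedDeriv n φ = (n / p : ℕ) * φ p := by
  rw [reducedDeriv_apply]
  exact sum_eq_single_of_mem p hp fun q hq hqp => by rw [h q hq hqp, mul_zero]

theorem reducedDeriv_single_mem_Icc (n p : ℕ) :
    reducedDeriv n (Pi.single p 1) ∈ Set.Icc 0 (n : ℤ) := by
  by_cases hp : p ∈ n.primeFactors
  · rw [reducedDeriv_eq_div_mul hp fun q _ hqp => Pi.single_eq_of_ne hqp 1, Pi.single_eq_same,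
      mul_one]
    exact ⟨by positivity, by exact_mod_cast Nat.div_le_self n p⟩
  · rw [reducedDeriv_eq_zero fun q hq => Pi.single_eq_of_ne (ne_of_mem_of_not_mem hq hp) 1]
    exact ⟨le_rfl, by positivity⟩

theorem prime_dvd_of_dvd_reducedDeriv (hp : p ∈ n.primeFactors) (hsq : ¬ p ^ 2 ∣ n)
    (h : (n : ℤ) ∣ reducedDeriv n φ) : (p : ℤ) ∣ φ p := by
  obtain ⟨hpp, hpn, -⟩ := Nat.mem_primeFactors.1 hp
  have hothers : (p : ℤ) ∣ ∑ q ∈ n.primeFactors.erase p, ((n / q : ℕ) : ℤ) * φ q :=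
    dvd_sum fun q hq => by
      obtain ⟨hqp, hq⟩ := mem_erase.1 hq
      have hcop : p.Coprime q :=
        (Nat.coprime_primes hpp (Nat.prime_of_mem_primeFactors hq)).2 hqp.symm
      have hpq : p ∣ n / q := hcop.dvd_of_dvd_mul_left
        (by rwa [Nat.mul_div_cancel' (Nat.dvd_of_mem_primeFactors hq)])
      exact (Int.natCast_dvd_natCast.2 hpq).mul_right _
  have hself : (p : ℤ) ∣ (n / p : ℕ) * φ p := by
    rw [reducedDeriv_apply, ← add_sum_erase _ _ hp] at h
    exact (dvd_add_left hothers).1 ((Int.natCast_dvd_natCast.2 hpn).trans h)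
  refine ((Nat.prime_iff_prime_int.1 hpp).dvd_or_dvd hself).resolve_left fun hdvd => hsq ?_
  rw [pow_two]
  exact (Nat.dvd_div_iff_mul_dvd hpn).1 (by exact_mod_cast hdvd)

theorem exists_reducedDeriv_eq {X : ℤ} {t : ℝ} (hX1 : n = 1 → X = 0)
    (hX : |(X : ℝ)| ≤ radN n * t) :
    ∃ φ : ℕ → ℤ, reducedDeriv n φ = (n / radN n : ℕ) * X ∧
      ∀ p ∈ n.primeFactors, |(φ p : ℝ)| ≤ p * (t + #n.primeFactors) := by
  obtain hn | hn := n.primeFactors.eq_empty_or_nonempty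
  · obtain rfl | rfl := Nat.primeFactors_eq_empty.1 hn
    · exact ⟨0, by simp⟩
    · exact ⟨0, by simp [hX1]⟩
  have hcop : Pairwise (Function.onFun IsCoprime fun p : n.primeFactors => ((p : ℕ) : ℤ)) :=
    fun p q hpq => Nat.isCoprime_iff_coprime.2 <| (Nat.coprime_primes
      (Nat.prime_of_mem_primeFactors p.2) (Nat.prime_of_mem_primeFactors q.2)).2
        (Subtype.coe_ne_coe.2 hpq)
  obtain ⟨φ, hφX, hφ⟩ := exists_sum_mul_prod_sdiff_eq hn (s := fun p : ℕ => (p : ℤ))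
    (fun p hp => by exact_mod_cast (Nat.prime_of_mem_primeFactors hp).pos) hcop
    (x := X) (t := t) (by simpa [radN] using hX)
  refine ⟨φ, ?_, by simpa using hφ⟩
  rw [reducedDeriv_apply, ← hφX, mul_sum]
  refine sum_congr rfl fun p hp => ?_
  have hdiv : n / p = n / radN n * ∏ q ∈ n.primeFactors \ {p}, q := by
    refine Nat.div_eq_of_eq_mul_right (Nat.prime_of_mem_primeFactors hp).pos ?_
    rw [mul_left_comm, ← prod_eq_mul_prod_sdiff_singleton_of_mem hp (fun q => q)]
    exact (Nat.div_mul_cancel (radN_dvd n)).symm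
  rw [hdiv]
  push_cast
  ring

end reducedDeriv

theorem exists_reducedDeriv_eq₃ {a b c : ℕ} (hab : a.Coprime b) (hac : a.Coprime c)
    (hbc : b.Coprime c) {f g h : ℕ → ℤ} {K : ℝ} (hf : ∀ p ∈ a.primeFactors, |(f p : ℝ)| ≤ K)
    (hg : ∀ p ∈ b.primeFactors, |(g p : ℝ)| ≤ K) (hh : ∀ p ∈ c.primeFactors, |(h p : ℝ)| ≤ K) :
    ∃ φ : ℕ → ℤ, reducedDeriv a φ = reducedDeriv a f ∧ reducedDeriv b φ = reducedDeriv b g ∧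
      reducedDeriv c φ = reducedDeriv c h ∧
      ∀ p ∈ (a * b * c).primeFactors, |(φ p : ℝ)| ≤ K := by
  set φ := a.primeFactors.piecewise f (b.primeFactors.piecewise g h)
  have hφa : ∀ p ∈ a.primeFactors, φ p = f p := fun p hp => piecewise_eq_of_mem _ _ _ hp
  have hφb : ∀ p ∈ b.primeFactors, φ p = g p := fun p hp =>
    (piecewise_eq_of_notMem _ _ _ (disjoint_right.1 hab.disjoint_primeFactors hp)).trans
      (piecewise_eq_of_mem _ _ _ hp)
  have hφc : ∀ p ∈ c.primeFactors, φ p = h p := fun p hp =>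
    (piecewise_eq_of_notMem _ _ _ (disjoint_right.1 hac.disjoint_primeFactors hp)).trans
      (piecewise_eq_of_notMem _ _ _ (disjoint_right.1 hbc.disjoint_primeFactors hp))
  refine ⟨φ, reducedDeriv_congr hφa, reducedDeriv_congr hφb, reducedDeriv_congr hφc, ?_⟩
  rw [(hac.mul_left hbc).primeFactors_mul, hab.primeFactors_mul]
  simp only [mem_union]
  rintro p ((hp | hp) | hp)
  · exact hφa p hp ▸ hf p hp
  · exact hφb p hp ▸ hg p hp
  · exact hφc p hp ▸ hh p hp

/-- The pair `a, b` admits a weight `φ`, bounded by `K` on the primes dividing `ab(a + b)`, that is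
additive on `a + b` and has nonzero Wronskian, all with respect to the reduced derivative. -/
def HasReducedSolution (a b : ℕ) (K : ℝ) : Prop :=
  ∃ φ : ℕ → ℤ, reducedDeriv (a + b) φ = reducedDeriv a φ + reducedDeriv b φ ∧
    a * reducedDeriv b φ ≠ b * reducedDeriv a φ ∧
    ∀ p ∈ (a * b * (a + b)).primeFactors, |(φ p : ℝ)| ≤ K

namespace HasReducedSolution

variable {a b : ℕ} {K K' : ℝ}

theorem mono (h : HasReducedSolution a b K) (hK : K ≤ K') : HasReducedSolution a b K' :=
  let ⟨φ, hsum, hW, hφ⟩ := h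
  ⟨φ, hsum, hW, fun p hp => (hφ p hp).trans hK⟩

theorem symm (h : HasReducedSolution a b K) : HasReducedSolution b a K :=
  let ⟨φ, hsum, hW, hφ⟩ := h
  ⟨φ, by rw [add_comm b, add_comm (reducedDeriv b φ), hsum], hW.symm,
    by rwa [add_comm b, mul_comm b]⟩

end HasReducedSolution

/-- The derivation `ψ(p) = (valProd N / v_p(N)) φ(p)`, whose arithmetic derivative is `valProd N`
times the reduced derivative of `φ` on divisors of `N` coprime to their cofactor. Off the primes
dividing `N` the valuation is `0`, and the convention `x / 0 = 0` makes `ψ` vanish there. -/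
def scaledDeriv (N : ℕ) (φ : ℕ → ℤ) (p : ℕ) : ℤ :=
  ((valProd N / N.factorization p : ℕ) : ℤ) * φ p

section scaledDeriv

variable {N p : ℕ} {φ : ℕ → ℤ} {K : ℝ}

theorem scaledDeriv_eq_zero (hp : p ∉ N.primeFactors) : scaledDeriv N φ p = 0 := by
  rw [scaledDeriv, Finsupp.notMem_support_iff.1 hp, Nat.div_zero, Nat.cast_zero, zero_mul]

theorem dpsi_scaledDeriv {m n : ℕ} (h : m.Coprime n) (φ : ℕ → ℤ) :
    dpsi (scaledDeriv (m * n) φ) m = valProd (m * n) * reducedDeriv m φ := by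
  rw [dpsi, reducedDeriv_apply, mul_sum, Int.natAbs_natCast]
  refine sum_congr rfl fun p hp => ?_
  have hfac : (m * n).factorization p = m.factorization p :=
    Nat.factorization_eq_of_coprime_left h (Nat.mem_primeFactors_iff_mem_primeFactorsList.1 hp)
  have hmem : p ∈ (m * n).primeFactors := by
    rw [h.primeFactors_mul]
    exact mem_union_left _ hp
  have hdvd : (m * n).factorization p ∣ valProd (m * n) := dvd_prod_of_mem _ hmem
  rw [scaledDeriv, ← hfac]
  conv_rhs => rw [← Nat.mul_div_cancel' hdvd]
  push_cast
  ring

theorem abs_scaledDeriv_le (hK : 0 ≤ K) (hφ : ∀ p ∈ N.primeFactors, |(φ p : ℝ)| ≤ K) (p : ℕ) :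
    |(scaledDeriv N φ p : ℝ)| ≤ valProd N * K := by
  by_cases hp : p ∈ N.primeFactors
  · rw [scaledDeriv, Int.cast_mul, abs_mul, Int.cast_natCast, Nat.abs_cast]
    gcongr
    · exact Nat.div_le_self _ _
    · exact hφ p hp
  · rw [scaledDeriv_eq_zero hp, Int.cast_zero, abs_zero]
    positivity

theorem isDeriv_scaledDeriv (N : ℕ) (φ : ℕ → ℤ) : IsDeriv (scaledDeriv N φ) := by
  refine ⟨fun p hp => scaledDeriv_eq_zero fun h => hp (Nat.prime_of_mem_primeFactors h),
    ∑ q ∈ N.primeFactors, |scaledDeriv N φ q|, fun p => ?_⟩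
  by_cases hp : p ∈ N.primeFactors
  · exact single_le_sum (f := fun q => |scaledDeriv N φ q|) (fun q _ => abs_nonneg _) hp
  · rw [scaledDeriv_eq_zero hp, abs_zero]
    exact sum_nonneg fun q _ => abs_nonneg _

end scaledDeriv

theorem HasReducedSolution.exists_memT {a b : ℕ} {K : ℝ} (hab : a.Coprime b) (hK : 0 ≤ K)
    (h : HasReducedSolution a b K) :
    ∃ ψ : ℕ → ℤ, MemT a b ψ ∧ Wpsi ψ a b ≠ 0 ∧ dNorm ψ ≤ valProd (a * b * (a + b)) * K := by
  obtain ⟨φ, hsum, hW, hφ⟩ := h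
  have hac : a.Coprime (a + b) := by simpa using hab
  have hbc : b.Coprime (a + b) := by simpa using hab.symm
  set N := a * b * (a + b) with hN
  set ψ := scaledDeriv N φ with hψ
  have ha : dpsi ψ a = valProd N * reducedDeriv a φ := by
    rw [hψ, hN, mul_assoc]
    exact dpsi_scaledDeriv (hab.mul_right hac) φ
  have hb : dpsi ψ b = valProd N * reducedDeriv b φ := by
    rw [hψ, hN, mul_comm a, mul_assoc]
    exact dpsi_scaledDeriv (hab.symm.mul_right hbc) φ
  have hc : dpsi ψ ((a : ℤ) + b) = valProd N * reducedDeriv (a + b) φ := by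
    rw [hψ, hN, mul_comm (a * b), ← Nat.cast_add]
    exact dpsi_scaledDeriv (hac.mul_left hbc).symm φ
  refine ⟨ψ, ⟨isDeriv_scaledDeriv N φ, fun p _ hpN => scaledDeriv_eq_zero fun hp =>
    hpN (Nat.dvd_of_mem_primeFactors hp), ?_⟩, fun hdep => hW ?_, ?_⟩
  · rw [ha, hb, hc, hsum, mul_add]
  · rw [Wpsi, ha, hb] at hdep
    refine mul_left_cancel₀ (Nat.cast_ne_zero.2 (valProd_ne_zero N)) ?_
    linear_combination hdep
  · exact ciSup_le fun p => by exact_mod_cast abs_scaledDeriv_le hK hφ p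

theorem natCast_div_radN_mul (a b : ℕ) (hab : a.Coprime b) :
    (((a + b) / radN (a + b) : ℕ) : ℝ) / (radN a * radN b) =
      (a + b : ℕ) / radN (a * b * (a + b)) := by
  have hac : a.Coprime (a + b) := by simpa using hab
  have hbc : b.Coprime (a + b) := by simpa using hab.symm
  rw [radN_mul_of_coprime (hac.mul_left hbc), radN_mul_of_coprime hab,
    Nat.cast_div_charZero (radN_dvd _), Nat.cast_mul, Nat.cast_mul, div_div, mul_comm (radN _ : ℝ)]

theorem exists_radN_solution {a b : ℕ} (ha : a ≠ 0) (hb : b ≠ 0) (hab : a.Coprime b) :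
    ∃ x y z : ℤ,
      ((a + b) / radN (a + b) : ℕ) * z = (a / radN a : ℕ) * x + (b / radN b : ℕ) * y ∧
      (a : ℤ) * ((b / radN b : ℕ) * y) ≠ b * ((a / radN a : ℕ) * x) ∧ (a = 1 → x = 0) ∧
      |(x : ℝ)| ≤ radN a * ((a + b : ℕ) / radN (a * b * (a + b)) + 1) ∧
      |(y : ℝ)| ≤ radN b * ((a + b : ℕ) / radN (a * b * (a + b)) + 1) ∧
      |(z : ℝ)| ≤ radN (a + b) * ((a + b : ℕ) / radN (a * b * (a + b)) + 1) := by
  have hbc : b.Coprime (a + b) := by simpa using hab.symm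
  have hradN (n : ℕ) : (0 : ℤ) < radN n := by exact_mod_cast radN_pos n
  have hdiv {n : ℕ} (hn : n ≠ 0) : (0 : ℤ) < (n / radN n : ℕ) := by exact_mod_cast div_radN_pos hn
  have hmul (n : ℕ) : (radN n : ℤ) * (n / radN n : ℕ) = n := by
    exact_mod_cast radN_mul_div_radN n
  obtain ⟨x, y, z, hsum, hdet, hx0, hxr, hy, hz⟩ := exists_bounded_solution (u := radN (a + b))
    (hradN a) (hradN b) (hdiv ha) (hdiv hb) (hdiv (by omega : a + b ≠ 0))
    (by simp only [hmul, Nat.cast_add])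
    (Nat.isCoprime_iff_coprime.2 (hab.of_dvd (radN_dvd a) (radN_dvd b)))
    (Nat.isCoprime_iff_coprime.2
      (hbc.symm.of_dvd (Nat.div_dvd_of_dvd (radN_dvd _)) (radN_dvd b)))
  simp only [Int.cast_natCast, natCast_div_radN_mul a b hab] at hy hz
  refine ⟨x, y, z, hsum.symm, fun h => ?_, ?_, ?_, hy, hz⟩
  · -- By `hdet`, the Wronskian is the product of the three cofactors `n / radN n`.
    refine (mul_pos (mul_pos (hdiv ha) (hdiv hb)) (hdiv (by omega : a + b ≠ 0))).ne' ?_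
    rw [← hdet]
    linear_combination h + (b / radN b : ℕ) * y * hmul a - (a / radN a : ℕ) * x * hmul b
  · rintro rfl
    have : radN 1 = 1 := by simp [radN]
    omega
  · rw [abs_of_nonneg (by exact_mod_cast hx0)]
    refine (show (x : ℝ) ≤ radN a by exact_mod_cast hxr.le).trans
      (le_mul_of_one_le_right (by positivity) (le_add_of_nonneg_left (by positivity)))

theorem hasReducedSolution_of_primeFactors_le {a b : ℕ} (ha : a ≠ 0) (hb : b ≠ 0)
    (hab : a.Coprime b) (hc : a + b ≠ 2) {P : ℝ}
    (hP : ∀ p ∈ (a * b * (a + b)).primeFactors, (p : ℝ) ≤ P) :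
    HasReducedSolution a b (P * ((a + b : ℕ) / radN (a * b * (a + b)) + 1 +
      #(a * b * (a + b)).primeFactors)) := by
  -- For `n = 1` the reduced derivative is identically zero, so only `x`, which can be chosen to
  -- vanish when `a = 1`, may be attached to the number `1`.
  wlog hb1 : b ≠ 1 generalizing a b with H
  · have hswap : b * a * (b + a) = a * b * (a + b) := by rw [mul_comm b, add_comm b]
    have hsol := (H hb ha hab.symm (by omega) (by rwa [hswap]) (by omega)).symm
    rwa [hswap, add_comm b] at hsol
  have hN : a * b * (a + b) ≠ 0 := by positivity
  have hbound {n : ℕ} (hn : n ∣ a * b * (a + b)) {t : ℝ} (ht : 0 ≤ t) {φ : ℕ → ℤ}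
      (hφ : ∀ p ∈ n.primeFactors, |(φ p : ℝ)| ≤ p * (t + #n.primeFactors)) :
      ∀ p ∈ n.primeFactors, |(φ p : ℝ)| ≤ P * (t + #(a * b * (a + b)).primeFactors) := by
    intro p hp
    have hsub := Nat.primeFactors_mono hn hN
    have hpP := hP p (hsub hp)
    exact (hφ p hp).trans (mul_le_mul hpP (by gcongr) (by positivity) (p.cast_nonneg.trans hpP))
  obtain ⟨x, y, z, hsum, hW, hx1, hx, hy, hz⟩ := exists_radN_solution ha hb hab
  obtain ⟨f, hfx, hf⟩ := exists_reducedDeriv_eq hx1 hx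
  obtain ⟨g, hgy, hg⟩ := exists_reducedDeriv_eq (fun h => absurd h hb1) hy
  obtain ⟨h, hhz, hh⟩ := exists_reducedDeriv_eq (fun _ => by omega) hz
  obtain ⟨φ, hφa, hφb, hφc, hφ⟩ := exists_reducedDeriv_eq₃ hab (by simpa using hab)
    (by simpa using hab.symm)
    (hbound (Dvd.intro _ (mul_assoc a b _).symm) (by positivity) hf)
    (hbound ((dvd_mul_left b a).mul_right _) (by positivity) hg)
    (hbound (dvd_mul_left _ _) (by positivity) hh)
  refine ⟨φ, ?_, ?_, hφ⟩
  · rw [hφa, hφb, hφc, hfx, hgy, hhz, hsum]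
  · rwa [hφa, hφb, hfx, hgy]

theorem exists_eq_mul_of_mul_eq_mul {R : Type*} [CommRing R] {a b x y : R} (hab : IsCoprime a b)
    (h : a * y = b * x) : ∃ k, x = a * k ∧ y = b * k := by
  obtain ⟨u, v, huv⟩ := hab
  exact ⟨u * x + v * y, by linear_combination (-x) * huv - v * h,
    by linear_combination (-y) * huv + u * h⟩

theorem exists_reducedDeriv_eq_mul {a b : ℕ} (hab : a.Coprime b) {φ : ℕ → ℤ}
    (hsum : reducedDeriv (a + b) φ = reducedDeriv a φ + reducedDeriv b φ)
    (hdep : a * reducedDeriv b φ = b * reducedDeriv a φ) :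
    ∃ k : ℤ, reducedDeriv a φ = a * k ∧ reducedDeriv b φ = b * k ∧
      reducedDeriv (a + b) φ = (a + b : ℕ) * k := by
  obtain ⟨k, hka, hkb⟩ := exists_eq_mul_of_mul_eq_mul (Nat.isCoprime_iff_coprime.2 hab) hdep
  refine ⟨k, hka, hkb, ?_⟩
  rw [hsum, hka, hkb]
  push_cast
  ring

theorem eq_zero_of_reducedDeriv_eq_mul {l m n q r : ℕ} (hlm : l.Coprime m) (hln : l.Coprime n)
    (hmn : m.Coprime n) (hn : n ≠ 0) (hq : q ∈ l.primeFactors) (hr : r ∈ m.primeFactors)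
    {φ : ℕ → ℤ} (hφ : ∀ s, s ≠ q → s ≠ r → φ s = 0) {k : ℤ} (hl : reducedDeriv l φ = l * k)
    (hm : reducedDeriv m φ = m * k) (hn' : reducedDeriv n φ = n * k) : φ = 0 := by
  have hne {i j s t : ℕ} (hij : i.Coprime j) (hs : s ∈ i.primeFactors) (ht : t ∈ j.primeFactors) :
      t ≠ s := (disjoint_iff_ne.1 hij.disjoint_primeFactors s hs t ht).symm
  have hk : k = 0 := by
    rw [reducedDeriv_eq_zero fun s hs => hφ s (hne hln hq hs) (hne hmn hr hs)] at hn'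
    exact (mul_eq_zero.1 hn'.symm).resolve_left (Nat.cast_ne_zero.2 hn)
  have hφ0 {i s : ℕ} (hs : s ∈ i.primeFactors) (hi : reducedDeriv i φ = i * k)
      (h : ∀ t ∈ i.primeFactors, t ≠ s → φ t = 0) : φ s = 0 := by
    rw [hk, mul_zero, reducedDeriv_eq_div_mul hs h] at hi
    refine (mul_eq_zero.1 hi).resolve_left (Nat.cast_ne_zero.2 ?_)
    exact (Nat.div_pos (Nat.le_of_mem_primeFactors hs) (Nat.pos_of_mem_primeFactors hs)).ne'
  funext s
  obtain rfl | hsq := eq_or_ne s q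
  · exact hφ0 hq hl fun t ht hts => hφ t hts (hne hlm.symm hr ht)
  obtain rfl | hsr := eq_or_ne s r
  · exact hφ0 hr hm fun t ht hts => hφ t (hne hlm hq ht) hts
  exact hφ s hsq hsr

theorem apply_eq_zero_of_dvd_reducedDeriv {n p : ℕ} {φ : ℕ → ℤ} (hp : p ∈ n.primeFactors)
    (hn : n < p ^ 2) (hdvd : (n : ℤ) ∣ reducedDeriv n φ) (hφ : |φ p| < p) : φ p = 0 :=
  Int.eq_zero_of_abs_lt_dvd (prime_dvd_of_dvd_reducedDeriv hp
    (fun h => hn.not_ge (Nat.le_of_dvd (Nat.pos_of_ne_zero (Nat.mem_primeFactors.1 hp).2.2) h))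
      hdvd) hφ

theorem reducedDeriv_ne_of_support {a b p q r : ℕ} (ha : a ≠ 0) (hb : b ≠ 0) (hab : a.Coprime b)
    (hp : p ∈ (a * b * (a + b)).primeFactors) (hpc : a + b < p ^ 2)
    (hqr : q ∈ a.primeFactors ∧ r ∈ b.primeFactors ∨
      q ∈ a.primeFactors ∧ r ∈ (a + b).primeFactors ∨
      q ∈ b.primeFactors ∧ r ∈ (a + b).primeFactors)
    {φ : ℕ → ℤ} (hφ0 : φ ≠ 0) (hφ : ∀ s, s ≠ p → s ≠ q → s ≠ r → φ s = 0) (hφp : |φ p| < p)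
    (hsum : reducedDeriv (a + b) φ = reducedDeriv a φ + reducedDeriv b φ) :
    a * reducedDeriv b φ ≠ b * reducedDeriv a φ := by
  have hac : a.Coprime (a + b) := by simpa using hab
  have hbc : b.Coprime (a + b) := by simpa using hab.symm
  intro hdep
  obtain ⟨k, hka, hkb, hkc⟩ := exists_reducedDeriv_eq_mul hab hsum hdep
  have hp0 : φ p = 0 := by
    rw [(hac.mul_left hbc).primeFactors_mul, hab.primeFactors_mul, mem_union, mem_union] at hp
    obtain (hp | hp) | hp := hp
    · exact apply_eq_zero_of_dvd_reducedDeriv hp (by omega) ⟨k, hka⟩ hφp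
    · exact apply_eq_zero_of_dvd_reducedDeriv hp (by omega) ⟨k, hkb⟩ hφp
    · exact apply_eq_zero_of_dvd_reducedDeriv hp hpc ⟨k, hkc⟩ hφp
  have hφqr : ∀ s, s ≠ q → s ≠ r → φ s = 0 := fun s hsq hsr => by
    obtain rfl | hsp := eq_or_ne s p
    exacts [hp0, hφ s hsp hsq hsr]
  refine hφ0 ?_
  obtain ⟨hq, hr⟩ | ⟨hq, hr⟩ | ⟨hq, hr⟩ := hqr
  · exact eq_zero_of_reducedDeriv_eq_mul hab hac hbc (by omega) hq hr hφqr hka hkb hkc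
  · exact eq_zero_of_reducedDeriv_eq_mul hac hab hbc.symm hb hq hr hφqr hka hkc hkb
  · exact eq_zero_of_reducedDeriv_eq_mul hbc hab.symm hac.symm ha hq hr hφqr hkb hkc hka

theorem abs_reducedDeriv_single_add_sub_le (a b s : ℕ) :
    |reducedDeriv a (Pi.single s 1) + reducedDeriv b (Pi.single s 1) -
      reducedDeriv (a + b) (Pi.single s 1)| ≤ (a + b : ℕ) := by
  obtain ⟨ha0, hac⟩ := reducedDeriv_single_mem_Icc a s
  obtain ⟨hb0, hbc⟩ := reducedDeriv_single_mem_Icc b s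
  obtain ⟨hc0, hcc⟩ := reducedDeriv_single_mem_Icc (a + b) s
  exact abs_le.2 (by constructor <;> omega)

theorem hasReducedSolution_of_three_primes {a b p q r : ℕ} (ha : a ≠ 0) (hb : b ≠ 0)
    (hab : a.Coprime b) (hp : p ∈ (a * b * (a + b)).primeFactors) (hpc : 3 * (a + b) < p ^ 2)
    (hqp : q ≠ p) (hrp : r ≠ p)
    (hqr : q ∈ a.primeFactors ∧ r ∈ b.primeFactors ∨
      q ∈ a.primeFactors ∧ r ∈ (a + b).primeFactors ∨
      q ∈ b.primeFactors ∧ r ∈ (a + b).primeFactors) :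
    HasReducedSolution a b √(3 * (a + b : ℕ)) := by
  have hq_ne_r : q ≠ r := by
    have hne {i j : ℕ} (hij : i.Coprime j) (h : q ∈ i.primeFactors ∧ r ∈ j.primeFactors) : q ≠ r :=
      disjoint_iff_ne.1 hij.disjoint_primeFactors q h.1 r h.2
    exact hqr.elim (hne hab) (Or.rec (hne (by simpa using hab)) (hne (by simpa using hab.symm)))
  have hcard : #{p, q, r} = 3 := card_eq_three.2 ⟨p, q, r, hqp.symm, hrp.symm, hq_ne_r, rfl⟩
  obtain ⟨φ, hφ0, hφsupp, hφL, hφ⟩ := exists_ne_zero_map_eq_zero_le (S := {p, q, r}) (by omega)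
    (reducedDeriv a + reducedDeriv b - reducedDeriv (a + b)) (B := (a + b : ℕ))
    (by exact_mod_cast Nat.one_le_iff_ne_zero.2 (by omega)) fun s _ => by
      exact_mod_cast abs_reducedDeriv_single_add_sub_le a b s
  have hbound (s : ℕ) : |(φ s : ℝ)| ≤ √(3 * (a + b : ℕ)) := (hφ s).trans_eq <| by
    rw [hcard, Real.sqrt_eq_rpow]
    norm_num
  have hsum : reducedDeriv (a + b) φ = reducedDeriv a φ + reducedDeriv b φ :=
    (sub_eq_zero.1 hφL).symm
  refine ⟨φ, hsum, reducedDeriv_ne_of_support ha hb hab hp (by omega) hqr hφ0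
    (fun s hsp hsq hsr => hφsupp s (by simp [hsp, hsq, hsr])) ?_ hsum, fun s _ => hbound s⟩
  have hsqrt : √(3 * (a + b : ℕ)) < p := by
    rw [Real.sqrt_lt' (by exact_mod_cast Nat.pos_of_mem_primeFactors hp)]
    exact_mod_cast hpc
  exact_mod_cast (hbound p).trans_lt hsqrt

theorem exists_mem_primeFactors_ne {n p : ℕ} (hn0 : n ≠ 0) (hn1 : n ≠ 1) (hnp : n ≠ p)
    (hsq : ¬ p ^ 2 ∣ n) : ∃ q ∈ n.primeFactors, q ≠ p := by
  by_contra! h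
  have hpow := Nat.eq_prime_pow_of_unique_prime_dvd hn0 fun {d} hd hdn =>
    h d (Nat.mem_primeFactors.2 ⟨hd, hdn, hn0⟩)
  generalize n.primeFactorsList.length = k at hpow
  match k with
  | 0 => exact hn1 (by simpa using hpow)
  | 1 => exact hnp (by simpa using hpow)
  | k + 2 => exact hsq (hpow ▸ pow_dvd_pow p (Nat.le_add_left 2 k))

theorem exists_mem_primeFactors_pair {a b p : ℕ} (ha : a ≠ 0) (hb : b ≠ 0) (hab : a.Coprime b)
    (hc : a + b ≠ 2)
    (hex : ¬ ∃ N q : ℕ, q.Prime ∧ ({a, b, a + b} : Multiset ℕ) = {1, N, q}) (hp : p.Prime)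
    (hpc : a + b < p ^ 2) :
    ∃ q r, q ≠ p ∧ r ≠ p ∧ (q ∈ a.primeFactors ∧ r ∈ b.primeFactors ∨
      q ∈ a.primeFactors ∧ r ∈ (a + b).primeFactors ∨
      q ∈ b.primeFactors ∧ r ∈ (a + b).primeFactors) := by
  have hother {n : ℕ} (hn0 : n ≠ 0) (hnc : n ≤ a + b) (hn : ¬ (n = 1 ∨ n = p)) :
      ∃ q ∈ n.primeFactors, q ≠ p :=
    exists_mem_primeFactors_ne hn0 (not_or.1 hn).1 (not_or.1 hn).2 fun h =>
      (hnc.trans_lt hpc).not_ge (Nat.le_of_dvd (Nat.pos_of_ne_zero hn0) h)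
  have hab_ne : ¬ (a = p ∧ b = p) := by
    rintro ⟨rfl, rfl⟩
    exact hp.ne_one (by simpa using hab)
  have hex1b : ¬ (a = 1 ∧ b = p) := fun ⟨ha1, hbp⟩ => hex ⟨a + b, p, hp, by
    rw [ha1, hbp]; exact congrArg _ (Multiset.pair_comm _ _)⟩
  have hexa1 : ¬ (b = 1 ∧ a = p) := fun ⟨hb1, hap⟩ => hex ⟨a + b, p, hp, by
    rw [hb1, hap]; exact (Multiset.cons_swap _ _ _).trans (congrArg _ (Multiset.pair_comm _ _))⟩
  have hex1c : ¬ (a = 1 ∧ a + b = p) := fun ⟨ha1, hcp⟩ => hex ⟨b, p, hp, by rw [hcp, ha1]⟩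
  have hexc1 : ¬ (b = 1 ∧ a + b = p) := fun ⟨hb1, hcp⟩ => hex ⟨a, p, hp, by
    rw [hcp, hb1]; exact Multiset.cons_swap _ _ _⟩
  by_cases ha' : a = 1 ∨ a = p
  · obtain ⟨q, hq, hqp⟩ := hother hb (by omega) (by omega)
    obtain ⟨r, hr, hrp⟩ := hother (n := a + b) (by omega) le_rfl (by omega)
    exact ⟨q, r, hqp, hrp, .inr (.inr ⟨hq, hr⟩)⟩
  obtain ⟨q, hq, hqp⟩ := hother ha (by omega) ha'
  by_cases hb' : b = 1 ∨ b = p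
  · obtain ⟨r, hr, hrp⟩ := hother (n := a + b) (by omega) le_rfl (by omega)
    exact ⟨q, r, hqp, hrp, .inr (.inl ⟨hq, hr⟩)⟩
  · obtain ⟨r, hr, hrp⟩ := hother hb (by omega) hb'
    exact ⟨q, r, hqp, hrp, .inl ⟨hq, hr⟩⟩

theorem hasReducedSolution_of_three_mul_lt_sq {a b p : ℕ} (ha : a ≠ 0) (hb : b ≠ 0)
    (hab : a.Coprime b) (hc : a + b ≠ 2)
    (hex : ¬ ∃ N q : ℕ, q.Prime ∧ ({a, b, a + b} : Multiset ℕ) = {1, N, q})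
    (hp : p ∈ (a * b * (a + b)).primeFactors) (hpc : 3 * (a + b) < p ^ 2) :
    HasReducedSolution a b √(3 * (a + b : ℕ)) := by
  obtain ⟨q, r, hqp, hrp, hqr⟩ := exists_mem_primeFactors_pair ha hb hab hc hex
    (Nat.prime_of_mem_primeFactors hp) (by omega)
  exact hasReducedSolution_of_three_primes ha hb hab hp hpc hqp hrp hqr

theorem hasReducedSolution_of_not_exceptional {a b : ℕ} (ha : a ≠ 0) (hb : b ≠ 0)
    (hab : a.Coprime b)
    (hex : ¬ ∃ N q : ℕ, q.Prime ∧ ({a, b, a + b} : Multiset ℕ) = {1, N, q}) :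
    HasReducedSolution a b (√(3 * (a + b : ℕ)) * ((a + b : ℕ) / radN (a * b * (a + b)) + 1 +
      #(a * b * (a + b)).primeFactors)) := by
  have hc : a + b ≠ 2 := fun hc => hex ⟨1, 2, Nat.prime_two, by
    obtain ⟨rfl, rfl⟩ : a = 1 ∧ b = 1 := by omega
    rfl⟩
  by_cases hP : ∀ p ∈ (a * b * (a + b)).primeFactors, (p : ℝ) ≤ √(3 * (a + b : ℕ))
  · exact hasReducedSolution_of_primeFactors_le ha hb hab hc hP
  · push Not at hP
    obtain ⟨p, hp, hPp⟩ := hP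
    have hpc : 3 * (a + b) < p ^ 2 := by exact_mod_cast Real.lt_sq_of_sqrt_lt hPp
    refine (hasReducedSolution_of_three_mul_lt_sq ha hb hab hc hex hp hpc).mono
      (le_mul_of_one_le_right (Real.sqrt_nonneg _) ?_)
    rw [add_right_comm]
    exact le_add_of_nonneg_left (by positivity)

theorem sqrt_three_mul_mul_div_add_le {c R θ ω d : ℝ} (hc : 1 ≤ c) (hθ : θ ≤ 1)
    (hR : c ^ θ ≤ R) (hω : ω ≤ d) (hd : 1 ≤ d) :
    √(3 * c) * (c / R + 1 + ω) ≤ 6 * d * c ^ (3 / 2 - θ) := by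
  have hc0 : 0 < c := by positivity
  have hdiv : c / R ≤ c ^ (1 - θ) := by
    rw [Real.rpow_sub hc0, Real.rpow_one]
    gcongr
  have hone : 1 ≤ c ^ (1 - θ) := Real.one_le_rpow hc (sub_nonneg.2 hθ)
  have hsum : c / R + 1 + ω ≤ 3 * d * c ^ (1 - θ) := by nlinarith
  have hsqrt : √(3 * c) ≤ 2 * c ^ (1 / 2 : ℝ) := by
    rw [Real.sqrt_mul zero_le_three, Real.sqrt_eq_rpow c]
    gcongr
    exact Real.sqrt_le_iff.2 (by norm_num)
  calc √(3 * c) * (c / R + 1 + ω) ≤ √(3 * c) * (3 * d * c ^ (1 - θ)) := by gcongr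
    _ ≤ 2 * c ^ (1 / 2 : ℝ) * (3 * d * c ^ (1 - θ)) := by gcongr
    _ = 6 * d * (c ^ (1 / 2 : ℝ) * c ^ (1 - θ)) := by ring
    _ = 6 * d * c ^ (3 / 2 - θ) := by
        rw [← Real.rpow_add hc0]
        ring_nf

theorem exists_memT_of_rpow_le_radN {a b : ℕ} {θ : ℝ} (ha : a ≠ 0) (hb : b ≠ 0)
    (hab : a.Coprime b) (hθ : θ ≤ 1) (hrad : ((a + b : ℕ) : ℝ) ^ θ ≤ radN (a * b * (a + b)))
    (hex : ¬ ∃ N q : ℕ, q.Prime ∧ ({a, b, a + b} : Multiset ℕ) = {1, N, q}) :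
    ∃ ψ : ℕ → ℤ, MemT a b ψ ∧ Wpsi ψ a b ≠ 0 ∧
      dNorm ψ ≤ 6 * #(a * b * (a + b)).divisors ^ 2 * ((a + b : ℕ) : ℝ) ^ (3 / 2 - θ) := by
  obtain ⟨ψ, hψ, hW, hnorm⟩ :=
    (hasReducedSolution_of_not_exceptional ha hb hab hex).exists_memT hab (by positivity)
  refine ⟨ψ, hψ, hW, hnorm.trans ?_⟩
  set N := a * b * (a + b)
  have hN : N ≠ 0 := by positivity
  have hval : (valProd N : ℝ) ≤ #N.divisors := by exact_mod_cast valProd_le_card_divisors hN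
  have hbound := sqrt_three_mul_mul_div_add_le (by exact_mod_cast (by omega : 1 ≤ a + b)) hθ hrad
    (Nat.cast_le.2 (card_primeFactors_le_card_divisors N))
    (by exact_mod_cast card_pos.2 (Nat.nonempty_divisors.2 hN))
  refine (mul_le_mul hval hbound (by positivity) (by positivity)).trans_eq ?_
  ring

theorem eventually_mul_card_divisors_sq_mul_rpow_lt {A α β : ℝ} (hA : 0 ≤ A) (h : α < β) (k : ℕ) :
    ∀ᶠ c : ℕ in Filter.atTop, ∀ n : ℕ, n ≠ 0 → n ≤ c ^ k →
      A * #n.divisors ^ 2 * (c : ℝ) ^ α < (c : ℝ) ^ β := by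
  set ε : ℝ := (β - α) / (2 * k + 1) with hε_def
  have hε : 0 < ε := div_pos (sub_pos.2 h) (by positivity)
  have hβ : 2 * k * ε + α + ε = β := by
    rw [hε_def]
    field_simp
    ring
  obtain ⟨C, hC⟩ := exists_card_divisors_le hε
  have hlim : Filter.Tendsto (fun c : ℕ => (c : ℝ) ^ ε) Filter.atTop Filter.atTop :=
    (tendsto_rpow_atTop hε).comp tendsto_natCast_atTop_atTop
  filter_upwards [hlim.eventually_gt_atTop (A * C ^ 2), Filter.eventually_gt_atTop 0]
    with c hcε hc n hn hnc
  have hc0 : (0 : ℝ) < c := by exact_mod_cast hc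
  calc A * #n.divisors ^ 2 * (c : ℝ) ^ α ≤ A * (C * (n : ℝ) ^ ε) ^ 2 * (c : ℝ) ^ α := by
        gcongr
        exact hC n hn
    _ ≤ A * (C ^ 2 * (((c : ℝ) ^ k) ^ ε) ^ 2) * (c : ℝ) ^ α := by
        rw [mul_pow]
        gcongr
        exact_mod_cast hnc
    _ = A * C ^ 2 * (c : ℝ) ^ (2 * k * ε + α) := by
        rw [← Real.rpow_natCast_mul hc0.le, ← Real.rpow_mul_natCast hc0.le, Real.rpow_add hc0]
        push_cast
        ring_nf
    _ < (c : ℝ) ^ ε * (c : ℝ) ^ (2 * k * ε + α) := by gcongr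
    _ = (c : ℝ) ^ β := by rw [← Real.rpow_add hc0, ← hβ, add_comm ε]

theorem sdc_of_eventually {η : ℝ} (h : ∀ᶠ c : ℕ in Filter.atTop, ∀ a b : ℕ, 0 < a → 0 < b →
    a + b = c → a.Coprime b →
      (¬ ∃ N q : ℕ, q.Prime ∧ ({a, b, c} : Multiset ℕ) = {1, N, q}) →
        ∃ ψ : ℕ → ℤ, MemT a b ψ ∧ Wpsi ψ a b ≠ 0 ∧ dNorm ψ < (c : ℝ) ^ η) : SDC η := by
  obtain ⟨c₀, hc₀⟩ := Filter.eventually_atTop.1 h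
  refine (Set.finite_Iic (c₀, c₀, c₀)).subset ?_
  rintro ⟨a, b, c⟩ ⟨ha, hb, hc, hab, hex, hψ⟩
  dsimp only at ha hb hc
  have hlt : c < c₀ := not_le.1 fun hge => hψ (hc₀ c hge a b ha hb hc hab hex)
  exact ⟨by dsimp only; omega, by dsimp only; omega, hlt.le⟩

theorem sdc_of_oesterle_abc_general (M : ℝ) (hM1 : 1 < M)
    (habc : ∀ a b c : ℕ, 0 < a → 0 < b → 0 < c → Nat.Coprime a b → a + b = c →
      (c : ℝ) < (radN (a * b * c) : ℝ) ^ M)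
    (η : ℝ) (hη : 3 / 2 - 1 / M < η) : SDC η := by
  refine sdc_of_eventually ?_
  filter_upwards [eventually_mul_card_divisors_sq_mul_rpow_lt (A := 6) (by norm_num) hη 3]
    with c hnorm_lt
  rintro a b ha hb rfl hab hex
  have hrad : ((a + b : ℕ) : ℝ) ^ (1 / M) ≤ radN (a * b * (a + b)) := by
    rw [one_div, Real.rpow_inv_le_iff_of_pos (by positivity) (by positivity) (by linarith)]
    exact (habc a b _ ha hb (by omega) hab rfl).le
  obtain ⟨ψ, hT, hW, hnorm⟩ := exists_memT_of_rpow_le_radN ha.ne' hb.ne' hab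
    ((div_le_one (by linarith)).2 hM1.le) hrad hex
  have hN : a * b * (a + b) ≤ (a + b) ^ 3 := by
    rw [pow_succ, pow_two]
    gcongr <;> omega
  exact ⟨ψ, hT, hW, hnorm.trans_lt (hnorm_lt _ (by positivity) hN)⟩

/-- Oesterlé's abc Conjecture implies the Small Derivatives Conjecture. -/
theorem sdc_of_oesterle_abc (M : ℝ) (hM1 : 1 < M) (hM2 : M < 2)
    (habc : ∀ a b c : ℕ, 0 < a → 0 < b → 0 < c → Nat.Coprime a b → a + b = c →
      (c : ℝ) < (radN (a * b * c) : ℝ) ^ M)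
    (η : ℝ) (hη : 1 - (2 - M) / (4 * M) < η) : SDC η := by
  refine sdc_of_oesterle_abc_general M hM1 habc η (lt_of_le_of_lt ?_ hη)
  field_simp
  linarith
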